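/- For every k ≥ 2 and every real M > 0, there exists a k-typed Schelling game (with stubborn agents) that admits an equilibrium assignment and in which there is an assignment v* such that SW(v*) ≥ M · SW(v) for every equilibrium assignment v; consequently the price of stability of k-typed Schelling games is unbounded. -/

import Mathlib

/-- A (social) Schelling game: agents `A`, of which `strategic` are the strategic
ones (the rest being stubborn), a social network `net` on the agents (the friends
of an agent are her neighbors in `net`, all other agents are her enemies), a
topology `top` on the set of locations `V`, and the preferred locations `loc`
of the (stubborn) agents. -/
structure SchellingGame (A V : Type) where
  strategic : Finset A
  net : SimpleGraph A
  top : SimpleGraph V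
  loc : A → V

namespace SchellingGame

variable {A V : Type} [Fintype A] [DecidableEq A] [Fintype V] [DecidableEq V]

/-- There are `n ≥ 2` agents, strictly more locations than agents, and the
stubborn agents have pairwise distinct preferred locations. -/
def WellFormed (g : SchellingGame A V) : Prop :=
  2 ≤ Fintype.card A ∧ Fintype.card A < Fintype.card V ∧
    Set.InjOn g.loc ↑(g.strategicᶜ)

/-- An assignment is an injective placement of the agents on the nodes of the
topology which places every stubborn agent at her preferred location. -/
def IsAssignment (g : SchellingGame A V) (v : A → V) : Prop :=
  Function.Injective v ∧ ∀ i ∉ g.strategic, v i = g.loc i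

/-- The number of friends of `i` occupying nodes adjacent to `v i`. -/
noncomputable def fcount (g : SchellingGame A V) (v : A → V) (i : A) : ℕ :=
  Nat.card {j : A // g.net.Adj i j ∧ g.top.Adj (v i) (v j)}

/-- The number of enemies of `i` occupying nodes adjacent to `v i`. -/
noncomputable def ecount (g : SchellingGame A V) (v : A → V) (i : A) : ℕ :=
  Nat.card {j : A // j ≠ i ∧ ¬ g.net.Adj i j ∧ g.top.Adj (v i) (v j)}

/-- The utility of agent `i` under assignment `v`: `0` if `i` has no adjacent
friends, and otherwise the fraction of friends among her occupied neighbors. -/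
noncomputable def util (g : SchellingGame A V) (v : A → V) (i : A) : ℚ :=
  if g.fcount v i = 0 then 0
  else (g.fcount v i : ℚ) / ((g.fcount v i : ℚ) + (g.ecount v i : ℚ))

/-- An assignment is an equilibrium if no strategic agent can strictly increase
her utility by relocating to an unoccupied node. -/
def IsEquilibrium (g : SchellingGame A V) (v : A → V) : Prop :=
  g.IsAssignment v ∧ ∀ i ∈ g.strategic, ∀ z : V, (∀ j : A, v j ≠ z) →
    g.util (Function.update v i z) i ≤ g.util v i

/-- The social welfare: the total utility of the strategic agents. -/
noncomputable def SW (g : SchellingGame A V) (v : A → V) : ℚ :=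
  ∑ i ∈ g.strategic, g.util v i

/-- `g` is a `k`-typed Schelling game with type map `typ`: two distinct agents are
friends iff they have the same type, and every type is nonempty. -/
def IsTypedGame (g : SchellingGame A V) (k : ℕ) (typ : A → Fin k) : Prop :=
  (∀ i j : A, g.net.Adj i j ↔ (i ≠ j ∧ typ i = typ j)) ∧ ∀ c : Fin k, ∃ i : A, typ i = c

end SchellingGame

/-- A star graph: one center node adjacent to all other nodes, and no other edges. -/
def IsStar {V : Type} (G : SimpleGraph V) : Prop :=
  ∃ c : V, ∀ a b : V, G.Adj a b ↔ (a ≠ b ∧ (a = c ∨ b = c))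

/-!
Two strategic agents and one stubborn ally have the same type, and three sites are free. The *leaf*
is adjacent only to the *hub*, the hub also to every enemy, and the *refuge* to the ally and to `s`
of the `n > s` enemies. With the leaf and the hub occupied the welfare is `1 + 1 / (1 + n)`, but the
agent at the hub prefers the refuge, where she gets `1 / (1 + s)`. So in every equilibrium somebody
sits in the refuge, which leaves the other agent without friends around her, and the welfare is only
`1 / (1 + s)`; and there is such an equilibrium, with the other agent at the leaf. The price of
stability is therefore at least `1 + s`, and `s` is arbitrary.
-/

namespace SchellingGame

variable {A V : Type}

theorem util_eq_div (g : SchellingGame A V) (v : A → V) (i : A) :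
    g.util v i = (g.fcount v i : ℚ) / (g.fcount v i + g.ecount v i) := by
  unfold util
  split_ifs with h <;> simp [h]

section Relabel

variable {A' V' : Type}

/-- The game `g` with its agents renamed along `e` and its nodes renamed along `f`; an assignment
`v` of `g` becomes `e.arrowCongr f v`. It turns a game on arbitrary finite types into one on
`Fin nA` and `Fin nV`. -/
def relabel (g : SchellingGame A V) (e : A ≃ A') (f : V ≃ V') : SchellingGame A' V' where
  strategic := g.strategic.map e.toEmbedding
  net := g.net.comap e.symm
  top := g.top.comap f.symm
  loc := e.arrowCongr f g.loc

variable (g : SchellingGame A V) (e : A ≃ A') (f : V ≃ V')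

theorem apply_mem_strategic_relabel {i : A} :
    e i ∈ (g.relabel e f).strategic ↔ i ∈ g.strategic := by
  simp [relabel]

theorem strategic_relabel_eq_univ [Fintype A] [Fintype A'] :
    (g.relabel e f).strategic = .univ ↔ g.strategic = .univ := by
  simp only [Finset.eq_univ_iff_forall, ← e.forall_congr_right, apply_mem_strategic_relabel]

theorem fcount_relabel (v : A → V) (i : A) :
    (g.relabel e f).fcount (e.arrowCongr f v) (e i) = g.fcount v i :=
  (Nat.card_congr (e.subtypeEquiv fun j => by simp [relabel])).symm

theorem ecount_relabel (v : A → V) (i : A) :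
    (g.relabel e f).ecount (e.arrowCongr f v) (e i) = g.ecount v i :=
  (Nat.card_congr (e.subtypeEquiv fun j => by simp [relabel])).symm

theorem util_relabel (v : A → V) (i : A) :
    (g.relabel e f).util (e.arrowCongr f v) (e i) = g.util v i := by
  simp only [util_eq_div, fcount_relabel, ecount_relabel]

theorem SW_relabel (v : A → V) : (g.relabel e f).SW (e.arrowCongr f v) = g.SW v := by
  simp only [SW, relabel, Finset.sum_map]
  exact Finset.sum_congr rfl fun i _ => g.util_relabel e f v i

theorem isAssignment_relabel {v : A → V} :
    (g.relabel e f).IsAssignment (e.arrowCongr f v) ↔ g.IsAssignment v := by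
  refine and_congr ?_ ?_
  · simp [Equiv.arrowCongr]
  · simp [e.forall_congr_left, relabel]

theorem isEquilibrium_relabel [DecidableEq A] [DecidableEq A'] {v : A → V} :
    (g.relabel e f).IsEquilibrium (e.arrowCongr f v) ↔ g.IsEquilibrium v := by
  have update_arrowCongr (i : A) (z : V) :
      Function.update (e.arrowCongr f v) (e i) (f z) = e.arrowCongr f (Function.update v i z) := by
    ext j
    obtain ⟨j, rfl⟩ := e.surjective j
    by_cases h : j = i <;> simp [h]
  refine and_congr (g.isAssignment_relabel e f) (e.forall_congr fun i => ?_).symm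
  refine imp_congr (g.apply_mem_strategic_relabel e f).symm (f.forall_congr fun z => ?_)
  refine imp_congr (e.forall_congr fun j => by simp) ?_
  rw [update_arrowCongr, util_relabel, util_relabel]

theorem WellFormed.relabel [Fintype A] [DecidableEq A] [Fintype V] [Fintype A'] [DecidableEq A']
    [Fintype V'] {g : SchellingGame A V} (h : g.WellFormed) : (g.relabel e f).WellFormed := by
  obtain ⟨two_le, card_lt, loc_injOn⟩ := h
  refine ⟨Fintype.card_congr e ▸ two_le,
    Fintype.card_congr e ▸ Fintype.card_congr f ▸ card_lt, ?_⟩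
  intro i hi j hj h
  obtain ⟨i, rfl⟩ := e.surjective i
  obtain ⟨j, rfl⟩ := e.surjective j
  simp only [Finset.coe_compl, Set.mem_compl_iff, Finset.mem_coe,
    apply_mem_strategic_relabel] at hi hj
  refine congrArg e (loc_injOn ?_ ?_ ?_) <;> simp_all [SchellingGame.relabel]

theorem IsTypedGame.relabel {g : SchellingGame A V} {k : ℕ} {typ : A → Fin k}
    (h : g.IsTypedGame k typ) : (g.relabel e f).IsTypedGame k (typ ∘ e.symm) :=
  ⟨fun i j => by simp [SchellingGame.relabel, h.1],
    (Function.Surjective.comp h.2 e.symm.surjective :)⟩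

end Relabel

section Anchored

variable {σ β π κ : Type} [Fintype σ]

/-- The game with strategic agents `σ`, stubborn agents `β` and types given by `typ`, on a topology
whose nodes are the homes `inr b` of the stubborn agents and free sites `π`. Its assignments are the
maps `Sum.map p id` for injective `p : σ → π`. The preferred locations `pos` of the strategic agents
play no part, but the structure `SchellingGame` asks for them. -/
def anchored (typ : σ ⊕ β → κ) (top : SimpleGraph (π ⊕ β)) (pos : σ → π) :
    SchellingGame (σ ⊕ β) (π ⊕ β) where
  strategic := Finset.univ.map .inl
  net :=
    { Adj i j := i ≠ j ∧ typ i = typ j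
      symm := ⟨fun _ _ h => ⟨h.1.symm, h.2.symm⟩⟩
      loopless := ⟨fun _ h => h.1 rfl⟩ }
  top := top
  loc := Sum.map pos id

variable (typ : σ ⊕ β → κ) (top : SimpleGraph (π ⊕ β)) (pos : σ → π)

theorem SW_anchored (v : σ ⊕ β → π ⊕ β) :
    (anchored typ top pos).SW v = ∑ i, (anchored typ top pos).util v (.inl i) := by
  simp [SW, anchored]

theorem isAssignment_anchored {v : σ ⊕ β → π ⊕ β} :
    (anchored typ top pos).IsAssignment v ↔ ∃ p : σ → π, p.Injective ∧ v = Sum.map p id := by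
  constructor
  · rintro ⟨v_inj, v_loc⟩
    have v_inr (b : β) : v (.inr b) = .inr b := v_loc _ (by simp [anchored])
    have v_inl (i : σ) : ∃ x, v (.inl i) = .inl x := by
      cases h : v (.inl i) with
      | inl x => exact ⟨x, rfl⟩
      | inr b => exact absurd (v_inj (h.trans (v_inr b).symm)) Sum.inl_ne_inr
    choose p hp using v_inl
    have v_eq : v = Sum.map p id := by
      ext (i | b)
      exacts [hp i, v_inr b]
    exact ⟨p, (Sum.map_injective.1 (v_eq ▸ v_inj)).1, v_eq⟩
  · rintro ⟨p, p_inj, rfl⟩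
    exact ⟨p_inj.sumMap Function.injective_id, by simp [anchored]⟩

theorem isEquilibrium_anchored [DecidableEq σ] [DecidableEq β] {p : σ → π} (hp : p.Injective) :
    (anchored typ top pos).IsEquilibrium (Sum.map p id) ↔ ∀ i, ∀ z, (∀ j, p j ≠ z) →
      (anchored typ top pos).util (Sum.map (Function.update p i z) id) (.inl i) ≤
        (anchored typ top pos).util (Sum.map p id) (.inl i) := by
  have update_map (i : σ) (z : π) : Function.update (Sum.map p (id : β → β)) (.inl i) (.inl z) =
      Sum.map (Function.update p i z) id := by
    ext (j | b)
    · by_cases h : j = i <;> simp [h]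
    · simp
  have isAssignment := (isAssignment_anchored typ top pos).2 ⟨p, hp, rfl⟩
  simp only [IsEquilibrium, isAssignment, true_and]
  simp [anchored, update_map]

theorem strategic_anchored_ne_univ [Fintype β] [Nonempty β] :
    (anchored typ top pos).strategic ≠ .univ := by
  simp [anchored, Finset.eq_univ_iff_forall]

theorem wellFormed_anchored [Fintype β] [Fintype π] [DecidableEq σ] [DecidableEq β]
    (two_le : 2 ≤ Fintype.card σ + Fintype.card β) (card_lt : Fintype.card σ < Fintype.card π) :
    (anchored typ top pos).WellFormed := by
  refine ⟨by simpa using two_le, by simpa using card_lt, ?_⟩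
  rintro (i | b) hi (j | c) hj h <;> simp_all [anchored]

theorem isTypedGame_anchored {k : ℕ} {typ : σ ⊕ β → Fin k} (h : typ.Surjective) :
    (anchored typ top pos).IsTypedGame k typ :=
  ⟨fun _ _ => Iff.rfl, h⟩

end Anchored

end SchellingGame

namespace Refuge

open SchellingGame

/-- The nodes of the topology which no stubborn agent occupies. -/
inductive Site
  | leaf
  | hub
  | refuge
  deriving DecidableEq

open Site

instance : Fintype Site := ⟨{leaf, hub, refuge}, by rintro (_ | _ | _) <;> decide⟩

variable {ι : Type} {k : ℕ}

/-- Adjacency in the topology, with each edge listed in one direction only. The node of the ally is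
`inr none`, that of the enemy `i` is `inr (some i)`, and the refuge sees only the enemies in `S`. -/
def Link (S : Finset ι) : Site ⊕ Option ι → Site ⊕ Option ι → Prop
  | .inl leaf, .inl hub => True
  | .inl hub, .inr (some _) => True
  | .inl refuge, .inr none => True
  | .inl refuge, .inr (some i) => i ∈ S
  | _, _ => False

/-- The type map: the strategic agents `Bool` and the ally have type `0`, the enemies have the
nonzero types given by `c`. -/
def agentType (c : ι → Fin k) : Bool ⊕ Option ι → Fin (k + 1)
  | .inl _ => 0
  | .inr none => 0
  | .inr (some i) => (c i).succ

theorem agentType_surjective {c : ι → Fin k} (hc : c.Surjective) :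
    (agentType c).Surjective := by
  refine Fin.cases ⟨.inl true, rfl⟩ fun t => ?_
  obtain ⟨i, rfl⟩ := hc t
  exact ⟨.inr (some i), rfl⟩

/-- The game whose price of stability is at least `1 + S.card`, for enemies `ι` with the types `c`
of which those in `S` see the refuge. -/
def game (c : ι → Fin k) (S : Finset ι) :
    SchellingGame (Bool ⊕ Option ι) (Site ⊕ Option ι) :=
  anchored (agentType c) (.fromRel (Link S)) fun _ => leaf

theorem isTypedGame_game {c : ι → Fin k} (S : Finset ι) (hc : c.Surjective) :
    (game c S).IsTypedGame (k + 1) (agentType c) :=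
  isTypedGame_anchored _ _ (agentType_surjective hc)

variable [Fintype ι]

/-- The utility of a strategic agent at the first site while the other is at the second one. -/
def payoff (S : Finset ι) : Site → Site → ℚ
  | leaf, hub => 1
  | hub, leaf => 1 / (1 + Fintype.card ι)
  | refuge, _ => 1 / (1 + S.card)
  | _, _ => 0

variable (c : ι → Fin k) (S : Finset ι)

theorem wellFormed_game [DecidableEq ι] : (game c S).WellFormed :=
  wellFormed_anchored _ _ _ (by simp) (by decide)

theorem strategic_game_ne_univ : (game c S).strategic ≠ .univ :=
  strategic_anchored_ne_univ _ _ _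

theorem util_game (p : Bool → Site) (b : Bool) :
    (game c S).util (Sum.map p id) (.inl b) = payoff S (p b) (p !b) := by
  classical
  have fcount_eq : (game c S).fcount (Sum.map p id) (.inl b) =
      (if (SimpleGraph.fromRel (Link S)).Adj (.inl (p b)) (.inl (p !b)) then 1 else 0) +
      (if (SimpleGraph.fromRel (Link S)).Adj (.inl (p b)) (.inr none) then 1 else 0) := by
    simp only [fcount, Nat.card_eq_fintype_card, Fintype.card_subtype, Finset.card_filter,
      Fintype.sum_sum_type, Fintype.sum_option, Fintype.sum_bool]
    cases b <;> simp [game, anchored, agentType, (Fin.succ_ne_zero _).symm]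
  have ecount_eq : (game c S).ecount (Sum.map p id) (.inl b) =
      (Finset.univ.filter fun i =>
        (SimpleGraph.fromRel (Link S)).Adj (.inl (p b)) (.inr (some i))).card := by
    simp only [ecount, Nat.card_eq_fintype_card, Fintype.card_subtype, Finset.card_filter,
      Fintype.sum_sum_type, Fintype.sum_option, Fintype.sum_bool]
    cases b <;> simp [game, anchored, agentType, (Fin.succ_ne_zero _).symm]
  rw [util_eq_div, fcount_eq, ecount_eq]
  cases p b <;> cases p !b <;> simp [Link, payoff]

theorem SW_game (p : Bool → Site) (b : Bool) :
    (game c S).SW (Sum.map p id) = payoff S (p b) (p !b) + payoff S (p !b) (p b) := by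
  rw [game, SW_anchored, ← game]
  cases b <;> simp [util_game, add_comm]

theorem exists_isAssignment_SW_eq :
    ∃ w, (game c S).IsAssignment w ∧ (game c S).SW w = 1 + 1 / (1 + Fintype.card ι) := by
  let p (b : Bool) : Site := if b then leaf else hub
  have p_inj : p.Injective := by decide
  refine ⟨Sum.map p id, (isAssignment_anchored _ _ _).2 ⟨p, p_inj, rfl⟩, ?_⟩
  simp [SW_game c S p true, p, payoff]

section Equilibria

variable [DecidableEq ι]

theorem isEquilibrium_game {p : Bool → Site} (hp : p.Injective) :
    (game c S).IsEquilibrium (Sum.map p id) ↔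
      ∀ b z, (∀ j, p j ≠ z) → payoff S z (p !b) ≤ payoff S (p b) (p !b) := by
  rw [game, isEquilibrium_anchored _ _ _ hp, ← game]
  simp [util_game]

variable {S} (hS : S.card < Fintype.card ι)
include hS

theorem exists_isEquilibrium : ∃ v, (game c S).IsEquilibrium v := by
  let p (b : Bool) : Site := if b then leaf else refuge
  have p_inj : p.Injective := by decide
  refine ⟨Sum.map p id, (isEquilibrium_game c S p_inj).2 fun b z hz => ?_⟩
  obtain rfl : z = hub := by
    have := hz true
    have := hz false
    cases z <;> simp_all [p]
  cases b
  · simp only [p, payoff, Bool.not_false, if_true, Bool.false_eq_true, if_false]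
    gcongr
  · simp [p, payoff]

theorem exists_eq_refuge {p : Bool → Site} (hp : p.Injective)
    (h : (game c S).IsEquilibrium (Sum.map p id)) : ∃ b, p b = refuge := by
  by_contra! p_ne
  obtain ⟨b, hub_eq, leaf_eq⟩ : ∃ b, p b = hub ∧ p (!b) = leaf := by
    have := hp.ne Bool.false_ne_true
    have := p_ne true
    have := p_ne false
    simp only [Bool.exists_bool, Bool.not_true, Bool.not_false]
    cases h₁ : p true <;> cases h₀ : p false <;> simp_all
  have refuge_le_hub := (isEquilibrium_game c S hp).1 h b refuge p_ne
  rw [hub_eq, leaf_eq] at refuge_le_hub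
  refine refuge_le_hub.not_gt ?_
  simp only [payoff]
  gcongr

theorem SW_eq_of_isEquilibrium {v : Bool ⊕ Option ι → Site ⊕ Option ι}
    (hv : (game c S).IsEquilibrium v) : (game c S).SW v = 1 / (1 + S.card) := by
  obtain ⟨p, hp, rfl⟩ := (isAssignment_anchored _ _ _).1 hv.1
  obtain ⟨b, hb⟩ := exists_eq_refuge c hS hp hv
  have other_ne : p (!b) ≠ refuge := hb ▸ hp.ne (Bool.not_ne_self b)
  rw [SW_game c S p b, hb]
  cases h : p !b <;> simp_all [payoff]

end Equilibria

end Refuge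

/-- for every k ≥ 2 and M > 0 there is a k-typed Schelling game (with
stubborn agents) admitting an equilibrium, together with an assignment v* whose social
welfare is at least M times the social welfare of every equilibrium; hence the price
of stability of k-typed Schelling games is unbounded. -/
theorem stmt15 (k : ℕ) (hk : 2 ≤ k) (M : ℚ) (hM : 0 < M) :
    ∃ (nA nV : ℕ) (g : SchellingGame (Fin nA) (Fin nV)) (typ : Fin nA → Fin k),
      g.WellFormed ∧ g.IsTypedGame k typ ∧ g.strategic ≠ Finset.univ ∧
      (∃ v, g.IsEquilibrium v) ∧
      (∃ w, g.IsAssignment w ∧ ∀ v, g.IsEquilibrium v → M * g.SW v ≤ g.SW w) := by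
  obtain ⟨m, rfl⟩ := Nat.exists_eq_add_of_le' hk
  obtain ⟨N, hN⟩ := exists_nat_ge M
  -- The enemies `inl t` realise all the other types and do not see the refuge.
  let c : Fin (m + 1) ⊕ Fin N → Fin (m + 1) := Sum.elim id 0
  have hc : c.Surjective := fun t => ⟨.inl t, rfl⟩
  let S : Finset (Fin (m + 1) ⊕ Fin N) := Finset.univ.map .inr
  have card_S : S.card = N := by simp [S]
  have hS : S.card < Fintype.card (Fin (m + 1) ⊕ Fin N) := by simp [card_S]
  obtain ⟨u, hu⟩ := Refuge.exists_isEquilibrium c hS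
  obtain ⟨w, hw, SW_w⟩ := Refuge.exists_isAssignment_SW_eq c S
  let e := Fintype.equivFin (Bool ⊕ Option (Fin (m + 1) ⊕ Fin N))
  let f := Fintype.equivFin (Refuge.Site ⊕ Option (Fin (m + 1) ⊕ Fin N))
  refine ⟨_, _, (Refuge.game c S).relabel e f, Refuge.agentType c ∘ e.symm,
    (Refuge.wellFormed_game c S).relabel e f, (Refuge.isTypedGame_game S hc).relabel e f,
    (SchellingGame.strategic_relabel_eq_univ _ e f).not.2 (Refuge.strategic_game_ne_univ c S),
    ⟨_, (SchellingGame.isEquilibrium_relabel _ e f).2 hu⟩,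
    ⟨_, (SchellingGame.isAssignment_relabel _ e f).2 hw, fun v' hv' => ?_⟩⟩
  obtain ⟨v, rfl⟩ := (e.arrowCongr f).surjective v'
  have hv := (SchellingGame.isEquilibrium_relabel _ e f).1 hv'
  rw [SchellingGame.SW_relabel, SchellingGame.SW_relabel,
    Refuge.SW_eq_of_isEquilibrium c hS hv, SW_w, card_S, mul_one_div]
  exact le_add_of_le_of_nonneg (div_le_one_of_le₀ (by linarith) (by positivity)) (by positivity)
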